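/- Let G be a DAG containing no active cycle, let X, Y, Z ⊆ V be disjoint with TRAILS(X,Y,Z) ≠ ∅, and let T be a minimal element of TRAILS(X,Y,Z) with respect to <_TRAIL, with converging nodes c_1, …, c_C. Then for every i = 1, …, C, the descendant path c_i → d^i_1 → ⋯ → d^i_{n_Z(i)} → Z(c_i) contains no chord and the trail t^i_1 ⇄ ⋯ ⇄ t^i_{n_t(i)} contains no chord; furthermore, the trails x ⇄ t^0_1 ⇄ ⋯ ⇄ t^0_{n_t(0)} and t^C_1 ⇄ ⋯ ⇄ t^C_{n_t(C)} ⇄ y contain no chord. -/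

import Mathlib

open scoped Classical

/-- `E` is the arc relation of a (finite) directed acyclic graph: there are no
directed cycles (hence also no loops and no pairs of opposite arcs). -/
def IsDAG {V : Type*} (E : V → V → Prop) : Prop :=
  ∀ v : V, ¬ Relation.TransGen E v v

/-- `d` is a descendant of `v`: there is a (nonempty) directed path from `v` to `d`. -/
def Desc {V : Type*} (E : V → V → Prop) (v d : V) : Prop :=
  Relation.TransGen E v d

/-- A trail: a sequence of `len + 1` pairwise distinct nodes
`f 0, f 1, …, f len`, consecutive ones joined by an arc of `E`
in one of the two possible directions.  Its length is `len`. -/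
structure Trail (V : Type*) (E : V → V → Prop) where
  len : ℕ
  f : ℕ → V
  arcs : ∀ i, i < len → E (f i) (f (i + 1)) ∨ E (f (i + 1)) (f i)
  inj : ∀ i, i ≤ len → ∀ j, j ≤ len → f i = f j → i = j

namespace Trail

variable {V : Type*} {E : V → V → Prop}

/-- The trail has a converging connection at the interior index `i`:
`f (i-1) → f i ← f (i+1)`. -/
def ConvAt (T : Trail V E) (i : ℕ) : Prop :=
  0 < i ∧ i < T.len ∧ E (T.f (i - 1)) (T.f i) ∧ E (T.f (i + 1)) (T.f i)

/-- The trail is activated by `Z`: every interior converging node is in `Z` or has a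
descendant in `Z`, and every interior non-converging node is not in `Z`. -/
def ActivatedBy (T : Trail V E) (Z : Set V) : Prop :=
  ∀ i, 0 < i → i < T.len →
    (T.ConvAt i → (T.f i ∈ Z ∨ ∃ d ∈ Z, Desc E (T.f i) d)) ∧
    (¬ T.ConvAt i → T.f i ∉ Z)

/-- The trail has a chord: an arc of `E` between two non-consecutive nodes. -/
def HasChord (T : Trail V E) : Prop :=
  ∃ i j, i + 1 < j ∧ j ≤ T.len ∧ (E (T.f i) (T.f j) ∨ E (T.f j) (T.f i))

end Trail

/-- `E` contains an active cycle: a closed trail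
`v ← x 0 ⇄ x 1 ⇄ ⋯ ⇄ x n ⇄ x (n+1) → v` (so `w = x 0` and `z = x (n+1)` are
distinct parents of `v`), with `n ≥ 1`, such that the trail
`x 0 ⇄ ⋯ ⇄ x (n+1)` has no converging connection and the closed trail has no chords. -/
def HasActiveCycle {V : Type*} (E : V → V → Prop) : Prop :=
  ∃ (v : V) (n : ℕ) (x : ℕ → V),
    1 ≤ n ∧
    E (x 0) v ∧ E (x (n + 1)) v ∧
    (∀ i, i ≤ n + 1 → x i ≠ v) ∧
    (∀ i, i ≤ n + 1 → ∀ j, j ≤ n + 1 → x i = x j → i = j) ∧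
    (∀ i, i < n + 1 → E (x i) (x (i + 1)) ∨ E (x (i + 1)) (x i)) ∧
    (∀ i, 0 < i → i < n + 1 → ¬ (E (x (i - 1)) (x i) ∧ E (x (i + 1)) (x i))) ∧
    (∀ i j, i + 1 < j → j ≤ n + 1 → ¬ (i = 0 ∧ j = n + 1) →
      ¬ E (x i) (x j) ∧ ¬ E (x j) (x i)) ∧
    (∀ i, 1 ≤ i → i ≤ n → ¬ E v (x i) ∧ ¬ E (x i) v)

/-- A descendant path from `c` to `Z` with `n` intermediate nodes:
`c = d 0 → d 1 → ⋯ → d n → d (n+1) ∈ Z`, with `d j ∉ Z` for all `j ≤ n`. -/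
def IsDescPath {V : Type*} (E : V → V → Prop) (Z : Set V) (c : V) (d : ℕ → V) (n : ℕ) :
    Prop :=
  d 0 = c ∧ d (n + 1) ∈ Z ∧ (∀ j, j ≤ n → d j ∉ Z) ∧ (∀ j, j ≤ n → E (d j) (d (j + 1)))

/-- `n_Z(c)`: the least number of intermediate nodes of a descendant path from `c` to `Z`
(this is `0` when `c ∈ Z`, since then no descendant path exists and `sInf ∅ = 0`). -/
noncomputable def nZ {V : Type*} (E : V → V → Prop) (Z : Set V) (c : V) : ℕ :=
  sInf {n | ∃ d : ℕ → V, IsDescPath E Z c d n}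

namespace Trail

variable {V : Type*} {E : V → V → Prop}

/-- The set of (interior) indices of `T` carrying a converging connection. -/
noncomputable def convIdx (T : Trail V E) : Finset ℕ :=
  (Finset.Ioo 0 T.len).filter fun i => T.ConvAt i

/-- The weight vector `(|{c₁,…,c_C} \ Z|, C, Σᵢ n_Z(i), Σᵢ n_t(i))` of a trail,
whose lexicographic comparison induces the order `<_TRAIL`.  (The total length
of the subtrails, `Σᵢ n_t(i)`, equals `len - 1 - C`.) -/
noncomputable def weight (T : Trail V E) (Z : Set V) : ℕ × ℕ × ℕ × ℕ :=
  ((T.convIdx.filter fun i => T.f i ∉ Z).card,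
   T.convIdx.card,
   ∑ i ∈ T.convIdx, nZ E Z (T.f i),
   T.len - 1 - T.convIdx.card)

end Trail

/-- Strict lexicographic order on `ℕ × ℕ × ℕ × ℕ`. -/
def LexLt4 (a b : ℕ × ℕ × ℕ × ℕ) : Prop :=
  a.1 < b.1 ∨ (a.1 = b.1 ∧ (a.2.1 < b.2.1 ∨ (a.2.1 = b.2.1 ∧
    (a.2.2.1 < b.2.2.1 ∨ (a.2.2.1 = b.2.2.1 ∧ a.2.2.2 < b.2.2.2)))))

/-- `T ∈ TRAILS(X, Y, Z)`: `T` is a trail from a node of `X` to a node of `Y`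
activated by `Z`. -/
def InTRAILS {V : Type*} {E : V → V → Prop} (T : Trail V E) (X Y Z : Set V) : Prop :=
  T.f 0 ∈ X ∧ T.f T.len ∈ Y ∧ T.ActivatedBy Z

/-- `T` is a minimal element of `TRAILS(X, Y, Z)` with respect to `<_TRAIL`. -/
def MinimalTrail {V : Type*} {E : V → V → Prop} (T : Trail V E) (X Y Z : Set V) : Prop :=
  InTRAILS T X Y Z ∧
    ∀ T' : Trail V E, InTRAILS T' X Y Z → ¬ LexLt4 (T'.weight Z) (T.weight Z)

namespace Trail

variable {V : Type*} {E : V → V → Prop}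

/-- The map on indices that leaves out the indices strictly between `p` and `p + k + 1`. -/
def skip (p k i : ℕ) : ℕ :=
  if i ≤ p then i else i + k

theorem skip_injective (p k : ℕ) : Function.Injective (skip p k) := by
  intro i j h
  unfold skip at h
  split_ifs at h <;> omega

/-- The trail obtained from `T` by following a chord between the indices `p` and `p + k + 1`. -/
def shortcut (T : Trail V E) (p k : ℕ) (hq : p + k + 1 ≤ T.len)
    (hc : E (T.f p) (T.f (p + k + 1)) ∨ E (T.f (p + k + 1)) (T.f p)) : Trail V E where
  len := T.len - k
  f i := T.f (skip p k i)
  arcs i hi := by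
    rcases lt_trichotomy i p with h | h | h
    · rw [skip, skip, if_pos (by omega), if_pos (by omega)]
      exact T.arcs i (by omega)
    · subst h
      rw [skip, skip, if_pos le_rfl, if_neg (by omega), show i + 1 + k = i + k + 1 by omega]
      exact hc
    · rw [skip, skip, if_neg (by omega), if_neg (by omega),
        show i + 1 + k = i + k + 1 by omega]
      exact T.arcs (i + k) (by omega)
  inj i hi j hj h := skip_injective p k <|
    T.inj _ (by unfold skip; split_ifs <;> omega) _ (by unfold skip; split_ifs <;> omega) h

theorem mem_convIdx {T : Trail V E} {i : ℕ} : i ∈ T.convIdx ↔ T.ConvAt i := by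
  simp only [convIdx, Finset.mem_filter, Finset.mem_Ioo, and_iff_right_iff_imp]
  exact fun h => ⟨h.1, h.2.1⟩

section Shortcut

variable {T : Trail V E} {p k : ℕ} {hq : p + k + 1 ≤ T.len}
  {hc : E (T.f p) (T.f (p + k + 1)) ∨ E (T.f (p + k + 1)) (T.f p)}

/-- If a shortcut creates no converging connection at the ends of the chord, its converging
connections are those of the original trail. -/
theorem shortcut_convAt_iff (hp : ¬ T.ConvAt p) (hq' : ¬ T.ConvAt (p + k + 1))
    (hp₀ : 0 < p → E (T.f (p - 1)) (T.f p) → ¬ E (T.f (p + k + 1)) (T.f p))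
    (hq₀ : p + k + 1 < T.len → E (T.f (p + k + 2)) (T.f (p + k + 1)) →
      ¬ E (T.f p) (T.f (p + k + 1))) (i : ℕ) :
    (T.shortcut p k hq hc).ConvAt i ↔ T.ConvAt (skip p k i) := by
  rcases lt_trichotomy i p with h | h | h
  · simp only [ConvAt, shortcut, skip, show i - 1 ≤ p by omega, show i ≤ p by omega,
      show i + 1 ≤ p by omega, if_true, show i < T.len - k by omega, show i < T.len by omega]
  · subst h
    refine iff_of_false ?_ (by simpa [skip] using hp)
    rintro ⟨h0, -, h1, h2⟩
    simp only [shortcut, skip, show i - 1 ≤ i by omega, le_refl, if_true,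
      show ¬ i + 1 ≤ i by omega, if_false, show i + 1 + k = i + k + 1 by omega] at h1 h2
    exact hp₀ h0 h1 h2
  · obtain rfl | h' := eq_or_lt_of_le (Nat.succ_le_of_lt h)
    · have hs : skip p k (p + 1) = p + k + 1 := by
        rw [skip, if_neg (by omega)]; omega
      refine iff_of_false ?_ (by simpa [hs] using hq')
      rintro ⟨-, hl, h1, h2⟩
      simp only [shortcut, skip, Nat.succ_eq_add_one, Nat.add_sub_cancel, le_refl, if_true,
        show ¬ p + 1 ≤ p by omega, show ¬ p + 1 + 1 ≤ p by omega, if_false,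
        show p + 1 + k = p + k + 1 by omega, show p + 1 + 1 + k = p + k + 2 by omega]
        at hl h1 h2
      exact hq₀ (by omega) h2 h1
    · simp only [ConvAt, shortcut, skip, show ¬ i - 1 ≤ p by omega, show ¬ i ≤ p by omega,
        show ¬ i + 1 ≤ p by omega, if_false, show i - 1 + k = i + k - 1 by omega,
        show i + 1 + k = i + k + 1 by omega, show 0 < i by omega, show 0 < i + k by omega,
        show i < T.len - k ↔ i + k < T.len by omega]

theorem convIdx_eq_image_skip (hn : ∀ i, p ≤ i → i ≤ p + k + 1 → ¬ T.ConvAt i)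
    (hiff : ∀ i, (T.shortcut p k hq hc).ConvAt i ↔ T.ConvAt (skip p k i)) :
    T.convIdx = (T.shortcut p k hq hc).convIdx.image (skip p k) := by
  ext j
  simp only [Finset.mem_image, mem_convIdx, hiff]
  refine ⟨fun hj => ?_, by rintro ⟨i, hi, rfl⟩; exact hi⟩
  have key : ∃ i, skip p k i = j := by
    by_cases h : j < p
    · exact ⟨j, if_pos h.le⟩
    · have : p + k + 1 < j := by
        by_contra h'
        exact hn j (by omega) (by omega) hj
      exact ⟨j - k, by rw [skip, if_neg (by omega)]; omega⟩
  obtain ⟨i, rfl⟩ := key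
  exact ⟨i, hj, rfl⟩

theorem InTRAILS_shortcut {X Y Z : Set V} (hT : InTRAILS T X Y Z)
    (hiff : ∀ i, (T.shortcut p k hq hc).ConvAt i ↔ T.ConvAt (skip p k i)) :
    InTRAILS (T.shortcut p k hq hc) X Y Z := by
  obtain ⟨hX, hY, hA⟩ := hT
  refine ⟨by simpa [shortcut, skip] using hX, ?_, fun i h0 hl => ?_⟩
  · simpa only [shortcut, skip, show ¬ T.len - k ≤ p by omega, if_false,
      show T.len - k + k = T.len by omega] using hY
  · rw [hiff]
    have hl' : i < T.len - k := hl
    exact hA (skip p k i) (by unfold skip; split_ifs <;> omega)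
      (by unfold skip; split_ifs <;> omega)

theorem weight_shortcut_lt (Z : Set V) (hk : 0 < k)
    (hn : ∀ i, p ≤ i → i ≤ p + k + 1 → ¬ T.ConvAt i)
    (hiff : ∀ i, (T.shortcut p k hq hc).ConvAt i ↔ T.ConvAt (skip p k i)) :
    LexLt4 ((T.shortcut p k hq hc).weight Z) (T.weight Z) := by
  have himg := convIdx_eq_image_skip hn hiff
  have hinj := skip_injective p k
  have hcard : (T.shortcut p k hq hc).convIdx.card ≤ T.len - k - 1 := by
    refine (Finset.card_filter_le _ _).trans ?_
    simp [shortcut]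
  refine Or.inr ⟨?_, Or.inr ⟨?_, Or.inr ⟨?_, ?_⟩⟩⟩
  · simp only [weight]
    rw [himg, Finset.filter_image, Finset.card_image_of_injective _ hinj]
    rfl
  · simp only [weight]
    rw [himg, Finset.card_image_of_injective _ hinj]
  · simp only [weight]
    rw [himg, Finset.sum_image hinj.injOn]
    rfl
  · simp only [weight]
    rw [himg, Finset.card_image_of_injective _ hinj]
    have : (T.shortcut p k hq hc).len = T.len - k := rfl
    omega

end Shortcut

/-- Past an index entered along the direction of the trail, a segment without converging
connections is a directed path. -/
theorem transGen_of_forall_not_convAt {T : Trail V E} {p : ℕ} (hp : 0 < p)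
    (hin : E (T.f (p - 1)) (T.f p)) (k : ℕ) (hq : p + k + 1 ≤ T.len)
    (hn : ∀ i, p ≤ i → i ≤ p + k → ¬ T.ConvAt i) :
    E (T.f (p + k)) (T.f (p + k + 1)) ∧
      Relation.TransGen E (T.f p) (T.f (p + k + 1)) := by
  induction k with
  | zero =>
    have h : E (T.f p) (T.f (p + 1)) :=
      (T.arcs p (by omega)).resolve_right fun h =>
        hn p le_rfl le_rfl ⟨hp, by omega, hin, h⟩
    exact ⟨h, .single h⟩
  | succ k ih =>
    obtain ⟨h1, h2⟩ := ih (by omega) fun i hi hi' => hn i hi (by omega)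
    have h : E (T.f (p + k + 1)) (T.f (p + k + 1 + 1)) :=
      (T.arcs _ (by omega)).resolve_right fun h =>
        hn (p + k + 1) (by omega) (by omega) ⟨by omega, by omega, h1, h⟩
    exact ⟨h, h2.tail h⟩

/-- Before an index entered against the direction of the trail, a segment without converging
connections is a directed path traversed backwards. -/
theorem transGen_of_forall_not_convAt' {T : Trail V E} {q : ℕ} (hq : q < T.len)
    (hin : E (T.f (q + 1)) (T.f q)) (k p : ℕ) (hp : p + k + 1 = q)
    (hn : ∀ i, p < i → i ≤ q → ¬ T.ConvAt i) :
    E (T.f (p + 1)) (T.f p) ∧ Relation.TransGen E (T.f q) (T.f p) := by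
  induction k generalizing p with
  | zero =>
    obtain rfl : p + 1 = q := by omega
    have h : E (T.f (p + 1)) (T.f p) :=
      (T.arcs p (by omega)).resolve_left fun h =>
        hn (p + 1) (by omega) le_rfl ⟨by omega, hq, h, hin⟩
    exact ⟨h, .single h⟩
  | succ k ih =>
    obtain ⟨h1, h2⟩ := ih (p + 1) (by omega) fun i hi hi' => hn i (by omega) hi'
    have h : E (T.f (p + 1)) (T.f p) :=
      (T.arcs p (by omega)).resolve_left fun h =>
        hn (p + 1) (by omega) (by omega) ⟨by omega, by omega, h, h1⟩
    exact ⟨h, h2.tail h⟩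

end Trail

/-- A segment of a minimal trail without converging connections has no arc between its ends. -/
theorem MinimalTrail.not_arc {V : Type*} {E : V → V → Prop} (hdag : IsDAG E) {X Y Z : Set V}
    {T : Trail V E} (hT : MinimalTrail T X Y Z) {p q : ℕ} (hpq : p + 1 < q) (hq : q ≤ T.len)
    (hn : ∀ i, p ≤ i → i ≤ q → ¬ T.ConvAt i) :
    ¬ E (T.f p) (T.f q) ∧ ¬ E (T.f q) (T.f p) := by
  obtain ⟨k, rfl⟩ : ∃ k, q = p + k + 1 := ⟨q - p - 1, by omega⟩
  suffices ¬ (E (T.f p) (T.f (p + k + 1)) ∨ E (T.f (p + k + 1)) (T.f p)) from not_or.1 this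
  intro hc
  have hiff := Trail.shortcut_convAt_iff (hq := hq) (hc := hc) (hn p le_rfl (by omega))
    (hn _ (by omega) le_rfl)
    (fun h0 hin h => hdag _ ((Trail.transGen_of_forall_not_convAt h0 hin k hq
      fun i hi hi' => hn i hi (by omega)).2.tail h))
    (fun hl hin h => hdag _ ((Trail.transGen_of_forall_not_convAt' hl hin k p rfl
      fun i hi hi' => hn i (by omega) hi').2.tail h))
  exact hT.2 _ (Trail.InTRAILS_shortcut hT.1 hiff)
    (Trail.weight_shortcut_lt Z (by omega) hn hiff)

theorem IsDescPath.transGen {V : Type*} {E : V → V → Prop} {Z : Set V} {c : V} {d : ℕ → V}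
    {n : ℕ} (hd : IsDescPath E Z c d n) {p q : ℕ} (hpq : p < q) (hq : q ≤ n + 1) :
    Relation.TransGen E (d p) (d q) := by
  induction q, hpq using Nat.le_induction with
  | base => exact .single (hd.2.2.2 p (by omega))
  | succ q hq' ih => exact (ih (by omega)).tail (hd.2.2.2 q (by omega))

/-- Following a forward chord of a descendant path gives a shorter descendant path. -/
theorem IsDescPath.shortcut {V : Type*} {E : V → V → Prop} {Z : Set V} {c : V} {d : ℕ → V}
    {n p k : ℕ} (hd : IsDescPath E Z c d n) (hq : p + k ≤ n) (h : E (d p) (d (p + k + 1))) :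
    IsDescPath E Z c (fun i => d (Trail.skip p k i)) (n - k) := by
  obtain ⟨h0, hZ, hnZ, harc⟩ := hd
  refine ⟨by simpa [Trail.skip] using h0, ?_, fun j hj => hnZ _ ?_, fun j hj => ?_⟩
  · simpa only [Trail.skip, show ¬ n - k + 1 ≤ p by omega, if_false,
      show n - k + 1 + k = n + 1 by omega] using hZ
  · unfold Trail.skip
    split_ifs <;> omega
  · rcases lt_trichotomy j p with hjp | rfl | hjp
    · simpa only [Trail.skip, hjp.le, show j + 1 ≤ p by omega, if_true] using harc j (by omega)
    · simpa only [Trail.skip, le_refl, if_true, show ¬ j + 1 ≤ j by omega, if_false,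
        show j + 1 + k = j + k + 1 by omega] using h
    · simpa only [Trail.skip, show ¬ j ≤ p by omega, show ¬ j + 1 ≤ p by omega, if_false,
        show j + 1 + k = j + k + 1 by omega] using harc (j + k) (by omega)

/-- For a minimal trail `T` of `TRAILS(X,Y,Z)`: the (shortest)
descendant paths contain no chord; the interior of each subtrail between two
consecutive converging nodes contains no chord; and the initial segment
`x ⇄ t⁰₁ ⇄ ⋯ ⇄ t⁰ₙ` as well as the final segment `tᶜ₁ ⇄ ⋯ ⇄ tᶜₙ ⇄ y`
contain no chord. -/
theorem minimal_trail_no_chords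
    {V : Type*} [Fintype V] (E : V → V → Prop) (hdag : IsDAG E)
    (hnac : ¬ HasActiveCycle E) (X Y Z : Set V)
    (hXY : Disjoint X Y) (hXZ : Disjoint X Z) (hYZ : Disjoint Y Z)
    (hne : ∃ T₀ : Trail V E, InTRAILS T₀ X Y Z)
    (T : Trail V E) (hT : MinimalTrail T X Y Z) :
    (∀ i, T.ConvAt i → ∀ (d : ℕ → V) (n : ℕ), IsDescPath E Z (T.f i) d n →
      (∀ (d' : ℕ → V) (n' : ℕ), IsDescPath E Z (T.f i) d' n' → n ≤ n') →
      ∀ p q, p + 1 < q → q ≤ n + 1 → ¬ E (d p) (d q) ∧ ¬ E (d q) (d p)) ∧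
    (∀ a b, T.ConvAt a → T.ConvAt b → a < b →
      (∀ i, a < i → i < b → ¬ T.ConvAt i) →
      ∀ p q, a < p → p + 1 < q → q < b →
        ¬ E (T.f p) (T.f q) ∧ ¬ E (T.f q) (T.f p)) ∧
    (∀ b, b ≤ T.len → (T.ConvAt b ∨ b = T.len) → (∀ i, i < b → ¬ T.ConvAt i) →
      ∀ p q, p + 1 < q → q < b → ¬ E (T.f p) (T.f q) ∧ ¬ E (T.f q) (T.f p)) ∧
    (∀ a, (T.ConvAt a ∨ a = 0) → (∀ i, a < i → i < T.len → ¬ T.ConvAt i) →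
      ∀ p q, a < p → p + 1 < q → q ≤ T.len →
        ¬ E (T.f p) (T.f q) ∧ ¬ E (T.f q) (T.f p)) := by
  refine ⟨fun i _ d n hd hmin p q hpq hq => ⟨fun h => ?_, fun h => ?_⟩, ?_, ?_, ?_⟩
  · obtain ⟨k, rfl⟩ : ∃ k, q = p + k + 1 := ⟨q - p - 1, by omega⟩
    have := hmin _ _ (hd.shortcut (by omega) h)
    omega
  · exact hdag _ ((hd.transGen (by omega) hq).tail h)
  · intro a b _ hb _ hn p q hp hpq hq
    exact hT.not_arc hdag hpq (by have := hb.2.1; omega)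
      fun i hi hi' => hn i (by omega) (by omega)
  · intro b hb _ hn p q hpq hq
    exact hT.not_arc hdag hpq (by omega) fun i hi hi' => hn i (by omega)
  · intro a _ hn p q hp hpq hq
    exact hT.not_arc hdag hpq hq fun i hi hi' hi'' => hn i (by omega) hi''.2.1 hi''
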